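/- Assume F satisfies Assumption F and in addition the strict monotonicity condition: at every point, F_r + F_p·w + wᵀ F_γ w ≥ 0 for all w ∈ ℝ^d. Then the operator T_h is monotone: for all bounded measurable functions φ, ψ : [0,T]×ℝ^d → ℝ with φ ≤ ψ everywhere, all h > 0 and all (t,x) with t + h ≤ T, one has T_h[φ](t,x) ≤ T_h[ψ](t,x). -/

import Mathlib

/-!
Write `Z = (1, H₁, H₂)` for the stacked weights and `Φ (r, p, γ) = r + h F(t, x, r, p, γ)`, so that
`T_h[ψ](t, x) = Φ (E[ψ(X̂) Z])`. The vector-valued expectation commutes with continuous linear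
functionals, so by the mean value theorem `T_h[ψ] - T_h[φ] = E[(ψ - φ)(X̂) DΦ(q) Z]` for a single
point `q`. Everything thus reduces to the pointwise inequality `DΦ(q) Z ≥ 0`. It holds because
`H₂ = H₁ H₁ᵀ - a⁻¹ / h`, which turns `DΦ(q) Z` into
`(1 - Tr (a⁻¹ F_γ)) + h (F_r + F_p · H₁ + H₁ᵀ F_γ H₁)`.
-/

open MeasureTheory ProbabilityTheory Matrix Real Set Function

noncomputable section

attribute [local instance] Matrix.normedAddCommGroup Matrix.normedSpace

abbrev Vec (d : ℕ) := Fin d → ℝ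
abbrev Mat (d : ℕ) := Matrix (Fin d) (Fin d) ℝ

/-- Law of the Gaussian vector `W_h` in `ℝ^d`, centered with covariance `h · I_d`. -/
def gaussVec (d : ℕ) (h : ℝ) : Measure (Vec d) :=
  Measure.pi fun _ => gaussianReal 0 h.toNNReal

/-- One step Euler scheme `X̂_h^{t,x} = x + μ(t,x) h + σ(t,x) W_h`. -/
def euler {d : ℕ} (μ : ℝ → Vec d → Vec d) (σ : ℝ → Vec d → Mat d)
    (h t : ℝ) (x w : Vec d) : Vec d :=
  x + h • μ t x + (σ t x).mulVec w

/-- Weight `H_1^h(t,x) = (σ(t,x)ᵀ)⁻¹ W_h / h`. -/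
def H1w {d : ℕ} (σ : ℝ → Vec d → Mat d) (h t : ℝ) (x w : Vec d) : Vec d :=
  (1 / h) • ((σ t x)ᵀ⁻¹.mulVec w)

/-- Weight `H_2^h(t,x) = (σ(t,x)ᵀ)⁻¹ (W_h W_hᵀ − h I_d) σ(t,x)⁻¹ / h²`. -/
def H2w {d : ℕ} (σ : ℝ → Vec d → Mat d) (h t : ℝ) (x w : Vec d) : Mat d :=
  (1 / h ^ 2) • ((σ t x)ᵀ⁻¹ * (vecMulVec w w - h • (1 : Mat d)) * (σ t x)⁻¹)

/-- One-step operator acting on the next-time function `ψ`. -/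
def step {d : ℕ} (F : ℝ → Vec d → ℝ → Vec d → Mat d → ℝ)
    (μ : ℝ → Vec d → Vec d) (σ : ℝ → Vec d → Mat d)
    (h t : ℝ) (ψ : Vec d → ℝ) (x : Vec d) : ℝ :=
  (∫ w, ψ (euler μ σ h t x w) ∂gaussVec d h)
    + h * F t x (∫ w, ψ (euler μ σ h t x w) ∂gaussVec d h)
        (fun i => ∫ w, ψ (euler μ σ h t x w) * H1w σ h t x w i ∂gaussVec d h)
        (Matrix.of fun i j => ∫ w, ψ (euler μ σ h t x w) * H2w σ h t x w i j ∂gaussVec d h)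

/-- The operator `T_h[ψ](t,x)`. -/
def Th {d : ℕ} (F : ℝ → Vec d → ℝ → Vec d → Mat d → ℝ)
    (μ : ℝ → Vec d → Vec d) (σ : ℝ → Vec d → Mat d)
    (ψ : ℝ → Vec d → ℝ) (h t : ℝ) (x : Vec d) : ℝ :=
  step F μ σ h t (ψ (t + h)) x

/-- Assumption F of the paper, with explicit partial derivatives `Fr, Fp, Fγ` of `F`
in the variables `(r,p,γ)`. -/
structure AssumptionF (d : ℕ) (σ : ℝ → Vec d → Mat d)
    (F : ℝ → Vec d → ℝ → Vec d → Mat d → ℝ)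
    (Fr : ℝ → Vec d → ℝ → Vec d → Mat d → ℝ)
    (Fp : ℝ → Vec d → ℝ → Vec d → Mat d → Vec d)
    (Fγ : ℝ → Vec d → ℝ → Vec d → Mat d → Mat d) : Prop where
  lipschitz : ∃ L : ℝ, 0 ≤ L ∧ ∀ t x x' r r' p p' γ γ',
    |F t x r p γ - F t x' r' p' γ'| ≤ L * (‖x - x'‖ + |r - r'| + ‖p - p'‖ + ‖γ - γ'‖)
  bound_at_zero : ∃ C : ℝ, ∀ t x, |F t x 0 0 0| ≤ C
  differentiable : ∀ t x r p γ, DifferentiableAt ℝ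
    (fun q : ℝ × Vec d × Mat d => F t x q.1 q.2.1 q.2.2) (r, p, γ)
  deriv_eq : ∀ t x r p γ (dq : ℝ × Vec d × Mat d),
    fderiv ℝ (fun q : ℝ × Vec d × Mat d => F t x q.1 q.2.1 q.2.2) (r, p, γ) dq
      = Fr t x r p γ * dq.1 + Fp t x r p γ ⬝ᵥ dq.2.1
        + ∑ i, ∑ j, Fγ t x r p γ i j * dq.2.2 i j
  psd : ∀ t x r p γ, (Fγ t x r p γ).PosSemidef
  trace_le_one : ∀ t x r p γ, ((σ t x * (σ t x)ᵀ)⁻¹ * Fγ t x r p γ).trace ≤ 1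
  lower_bound : ∃ K : ℝ, 0 ≤ K ∧ ∀ t x r p γ (w : Vec d),
    Fp t x r p γ ⬝ᵥ w + w ⬝ᵥ (Fγ t x r p γ).mulVec w ≥ -K

theorem apply_integral_smul_mono_of_hasFDerivAt {Ω E : Type*} [MeasurableSpace Ω] {ν : Measure Ω}
    [NormedAddCommGroup E] [NormedSpace ℝ E] [CompleteSpace E] {Φ : E → ℝ} {Φ' : E → E →L[ℝ] ℝ}
    {Z : Ω → E} {u v : Ω → ℝ} (hΦ : ∀ q, HasFDerivAt Φ (Φ' q) q)
    (hZ : ∀ q, ∀ᵐ ω ∂ν, 0 ≤ Φ' q (Z ω))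
    (hu : Integrable (fun ω => u ω • Z ω) ν) (hv : Integrable (fun ω => v ω • Z ω) ν)
    (huv : u ≤ᵐ[ν] v) :
    Φ (∫ ω, u ω • Z ω ∂ν) ≤ Φ (∫ ω, v ω • Z ω ∂ν) := by
  obtain ⟨q, -, hq⟩ := domain_mvt (fun q _ => (hΦ q).hasFDerivWithinAt) convex_univ
    (mem_univ (∫ ω, u ω • Z ω ∂ν)) (mem_univ (∫ ω, v ω • Z ω ∂ν))
  rw [← sub_nonneg, hq]
  calc 0 ≤ ∫ ω, (v ω - u ω) * Φ' q (Z ω) ∂ν := integral_nonneg_of_ae <| by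
        filter_upwards [huv, hZ q] with ω hω hZω using mul_nonneg (sub_nonneg.2 hω) hZω
    _ = ∫ ω, Φ' q (v ω • Z ω - u ω • Z ω) ∂ν := by
        simp only [← sub_smul, map_smul, smul_eq_mul]
    _ = Φ' q (∫ ω, v ω • Z ω ∂ν - ∫ ω, u ω • Z ω ∂ν) := by
        rw [← integral_sub hv hu]
        exact (Φ' q).integral_comp_comm (hv.sub hu)

lemma memLp_id_pi {ι : Type*} [Fintype ι] {E : ι → Type*} [∀ i, NormedAddCommGroup (E i)]
    [∀ i, MeasurableSpace (E i)] {ν : ∀ i, Measure (E i)} [∀ i, IsProbabilityMeasure (ν i)]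
    {p : ENNReal} (hν : ∀ i, MemLp id p (ν i)) : MemLp id p (Measure.pi ν) :=
  MemLp.of_eval fun i => (hν i).comp_measurePreserving (measurePreserving_eval ν i)

instance isProbabilityMeasure_gaussVec (d : ℕ) (h : ℝ) : IsProbabilityMeasure (gaussVec d h) :=
  inferInstanceAs (IsProbabilityMeasure (Measure.pi _))

lemma memLp_id_gaussVec (d : ℕ) (h : ℝ) (p : NNReal) : MemLp id p (gaussVec d h) :=
  memLp_id_pi fun _ => memLp_id_gaussianReal p

section Weights

variable {d : ℕ} {ν : Measure (Vec d)} (σ : ℝ → Vec d → Mat d) (h t : ℝ) (x : Vec d)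

lemma H2w_eq_vecMulVec_sub (w : Vec d) :
    H2w σ h t x w = vecMulVec (H1w σ h t x w) (H1w σ h t x w)
      - (1 / h) • (σ t x * (σ t x)ᵀ)⁻¹ := by
  have quadratic_term : (σ t x)ᵀ⁻¹ * vecMulVec w w * (σ t x)⁻¹
      = vecMulVec ((σ t x)ᵀ⁻¹ *ᵥ w) ((σ t x)ᵀ⁻¹ *ᵥ w) := by
    rw [mul_vecMulVec, vecMulVec_mul, ← mulVec_transpose, transpose_nonsing_inv]
  have constant_term : (σ t x)ᵀ⁻¹ * (h • (1 : Mat d)) * (σ t x)⁻¹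
      = h • (σ t x * (σ t x)ᵀ)⁻¹ := by
    rw [Matrix.mul_smul, Matrix.mul_one, Matrix.smul_mul, Matrix.mul_inv_rev]
  have h_div_sq : 1 / h ^ 2 * h = 1 / h := by field_simp
  rw [H2w, H1w, mul_sub, sub_mul, quadratic_term, constant_term, smul_sub, smul_smul, h_div_sq,
    smul_vecMulVec, vecMulVec_smul, smul_smul, ← sq, _root_.one_div_pow]

lemma sum_mul_H2w (G : Mat d) (w : Vec d) :
    ∑ i, ∑ j, G i j * H2w σ h t x w i j
      = H1w σ h t x w ⬝ᵥ G *ᵥ H1w σ h t x w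
        - 1 / h * ((σ t x * (σ t x)ᵀ)⁻¹ * G).trace := by
  have inv_symm : ((σ t x * (σ t x)ᵀ)⁻¹)ᵀ = (σ t x * (σ t x)ᵀ)⁻¹ := by
    rw [transpose_nonsing_inv, transpose_mul, transpose_transpose]
  have frobenius_eq_trace : ∑ i, ∑ j, G i j * H2w σ h t x w i j = (G * (H2w σ h t x w)ᵀ).trace :=
    sum_hadamard_eq G _
  rw [frobenius_eq_trace, H2w_eq_vecMulVec_sub, transpose_sub, transpose_vecMulVec,
    transpose_smul, inv_symm, mul_sub, trace_sub, mul_vecMulVec, trace_vecMulVec,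
    dotProduct_comm, Matrix.mul_smul, trace_smul, Matrix.trace_mul_comm G, smul_eq_mul]

lemma one_add_mul_weights_nonneg (hh : 0 < h) {r : ℝ} {p : Vec d} {G : Mat d}
    (htrace : ((σ t x * (σ t x)ᵀ)⁻¹ * G).trace ≤ 1)
    (hstrict : ∀ v : Vec d, 0 ≤ r + p ⬝ᵥ v + v ⬝ᵥ G *ᵥ v) (w : Vec d) :
    0 ≤ 1 + h * (r + p ⬝ᵥ H1w σ h t x w + ∑ i, ∑ j, G i j * H2w σ h t x w i j) := by
  set v := H1w σ h t x w with hv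
  calc 0 ≤ (1 - ((σ t x * (σ t x)ᵀ)⁻¹ * G).trace) + h * (r + p ⬝ᵥ v + v ⬝ᵥ G *ᵥ v) :=
        add_nonneg (sub_nonneg.2 htrace) (mul_nonneg hh.le (hstrict v))
    _ = 1 + h * (r + p ⬝ᵥ v + ∑ i, ∑ j, G i j * H2w σ h t x w i j) := by
        rw [sum_mul_H2w, ← hv]
        field_simp
        ring

lemma memLp_H1w {p : ENNReal} (hν : MemLp id p ν) : MemLp (H1w σ h t x) p ν :=
  ((mulVecLin (σ t x)ᵀ⁻¹).toContinuousLinearMap.comp_memLp' hν).const_smul (1 / h)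

lemma integrable_H2w_apply [IsFiniteMeasure ν] (hν : MemLp id 2 ν) (i j : Fin d) :
    Integrable (fun w => H2w σ h t x w i j) ν := by
  have hH1 := memLp_H1w σ h t x hν
  simp only [H2w_eq_vecMulVec_sub, Matrix.sub_apply, vecMulVec_apply]
  exact ((hH1.eval i).integrable_mul (hH1.eval j)).sub (integrable_const _)

/-- The space of triples `(r, p, γ)` of a value, a gradient and a Hessian. Matrices are encoded as
functions of two indices because the topology of `Mat d` is not reducibly the one induced by its
sup norm, which Bochner integration needs; the two types are definitionally equal, so derivatives
on `Jet d` and on `ℝ × Vec d × Mat d` are interchangeable. -/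
abbrev Jet (d : ℕ) := ℝ × Vec d × (Fin d → Fin d → ℝ)

/-- The stacked weights `(1, H₁, H₂)`: the expectation of `ψ(X̂) • jetWeight` is the triple of
arguments `(r, p, γ)` at which `T_h[ψ]` evaluates `F`, an approximation of `(ψ, Dψ, D²ψ)`. -/
def jetWeight (w : Vec d) : Jet d :=
  (1, H1w σ h t x w, fun i j => H2w σ h t x w i j)

lemma integrable_jetWeight [IsFiniteMeasure ν] (hν : MemLp id 2 ν) :
    Integrable (jetWeight σ h t x) ν :=
  (integrable_const 1).prodMk <|
    ((memLp_H1w σ h t x hν).integrable one_le_two).prodMk <|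
      .of_eval fun i => .of_eval fun j => integrable_H2w_apply σ h t x hν i j

lemma integral_smul_jetWeight {u : Vec d → ℝ}
    (hu : Integrable (fun w => u w • jetWeight σ h t x w) ν) :
    ∫ w, u w • jetWeight σ h t x w ∂ν
      = (∫ w, u w ∂ν, fun i => ∫ w, u w * H1w σ h t x w i ∂ν,
          fun i j => ∫ w, u w * H2w σ h t x w i j ∂ν) := by
  have value : (∫ w, u w • jetWeight σ h t x w ∂ν).1 = ∫ w, u w ∂ν := by
    rw [fst_integral hu]
    simp only [jetWeight, Prod.smul_fst, smul_eq_mul, mul_one]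
  have gradient (i : Fin d) : (∫ w, u w • jetWeight σ h t x w ∂ν).2.1 i
      = ∫ w, u w * H1w σ h t x w i ∂ν := by
    rw [snd_integral hu, fst_integral hu.snd, eval_integral hu.snd.fst.eval]
    rfl
  have hessian (i j : Fin d) : (∫ w, u w • jetWeight σ h t x w ∂ν).2.2 i j
      = ∫ w, u w * H2w σ h t x w i j ∂ν := by
    rw [snd_integral hu, snd_integral hu.snd, eval_integral hu.snd.snd.eval,
      eval_integral (hu.snd.snd.eval i).eval]
    rfl
  exact Prod.ext value (Prod.ext (funext gradient) (funext₂ hessian))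

end Weights

section OneStep

variable {d : ℕ} {F : ℝ → Vec d → ℝ → Vec d → Mat d → ℝ}
  {μ : ℝ → Vec d → Vec d} {σ : ℝ → Vec d → Mat d} {h t : ℝ} {x : Vec d}

lemma measurable_euler : Measurable (euler μ σ h t x) :=
  Continuous.measurable (by unfold euler; fun_prop)

lemma integrable_euler_smul_jetWeight {u : Vec d → ℝ} (hu : Measurable u) {C : ℝ}
    (hC : ∀ y, |u y| ≤ C) :
    Integrable (fun w => u (euler μ σ h t x w) • jetWeight σ h t x w) (gaussVec d h) :=
  (integrable_jetWeight σ h t x (memLp_id_gaussVec d h 2)).bdd_smul C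
    (hu.comp measurable_euler).aestronglyMeasurable (.of_forall fun _ => hC _)

/-- The map `(r, p, γ) ↦ r + h F(t, x, r, p, γ)`, through which `T_h` acts on the triple of
expectations of `ψ(X̂) • jetWeight`. -/
def jetStep (F : ℝ → Vec d → ℝ → Vec d → Mat d → ℝ) (h t : ℝ) (x : Vec d) (q : Jet d) : ℝ :=
  q.1 + h * F t x q.1 q.2.1 (of q.2.2)

lemma step_eq_jetStep_integral {u : Vec d → ℝ}
    (hu : Integrable (fun w => u (euler μ σ h t x w) • jetWeight σ h t x w) (gaussVec d h)) :
    step F μ σ h t u x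
      = jetStep F h t x (∫ w, u (euler μ σ h t x w) • jetWeight σ h t x w ∂gaussVec d h) := by
  rw [integral_smul_jetWeight σ h t x hu]
  rfl

lemma hasFDerivAt_jetStep {q : Jet d}
    (hF : DifferentiableAt ℝ (fun q : Jet d => F t x q.1 q.2.1 (of q.2.2)) q) :
    HasFDerivAt (jetStep F h t x)
      (.fst ℝ _ _ + h • fderiv ℝ (fun q : Jet d => F t x q.1 q.2.1 (of q.2.2)) q) q :=
  hasFDerivAt_fst.add (hF.hasFDerivAt.const_mul h)

end OneStep

theorem Th_monotone_general {d : ℕ} {μ : ℝ → Vec d → Vec d} {σ : ℝ → Vec d → Mat d}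
    {F : ℝ → Vec d → ℝ → Vec d → Mat d → ℝ} {h t : ℝ} {x : Vec d}
    {Fr : ℝ → Vec d → Mat d → ℝ} {Fp : ℝ → Vec d → Mat d → Vec d}
    {Fγ : ℝ → Vec d → Mat d → Mat d}
    (hh : 0 < h) (_hσ : IsUnit (σ t x).det)
    (hdiff : ∀ r p γ, DifferentiableAt ℝ
      (fun q : ℝ × Vec d × Mat d => F t x q.1 q.2.1 q.2.2) (r, p, γ))
    (hderiv : ∀ r p γ (dq : ℝ × Vec d × Mat d),
      fderiv ℝ (fun q : ℝ × Vec d × Mat d => F t x q.1 q.2.1 q.2.2) (r, p, γ) dq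
        = Fr r p γ * dq.1 + Fp r p γ ⬝ᵥ dq.2.1 + ∑ i, ∑ j, Fγ r p γ i j * dq.2.2 i j)
    (htrace : ∀ r p γ, ((σ t x * (σ t x)ᵀ)⁻¹ * Fγ r p γ).trace ≤ 1)
    (hstrict : ∀ r p γ (w : Vec d), 0 ≤ Fr r p γ + Fp r p γ ⬝ᵥ w + w ⬝ᵥ Fγ r p γ *ᵥ w)
    {φ ψ : ℝ → Vec d → ℝ}
    (hφ : Integrable (fun w => φ (t + h) (euler μ σ h t x w) • jetWeight σ h t x w)
      (gaussVec d h))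
    (hψ : Integrable (fun w => ψ (t + h) (euler μ σ h t x w) • jetWeight σ h t x w)
      (gaussVec d h))
    (hle : ∀ᵐ w ∂gaussVec d h,
      φ (t + h) (euler μ σ h t x w) ≤ ψ (t + h) (euler μ σ h t x w)) :
    Th F μ σ φ h t x ≤ Th F μ σ ψ h t x := by
  rw [Th, Th, step_eq_jetStep_integral hφ, step_eq_jetStep_integral hψ]
  refine apply_integral_smul_mono_of_hasFDerivAt
    (fun q => hasFDerivAt_jetStep (hdiff q.1 q.2.1 q.2.2))
    (fun ⟨r, p, γ⟩ => .of_forall fun w => ?_) hφ hψ hle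
  have hnonneg := one_add_mul_weights_nonneg σ h t x hh (htrace r p γ) (hstrict r p γ) w
  have hpairing := hderiv r p γ (1, H1w σ h t x w, H2w σ h t x w)
  rw [mul_one] at hpairing
  rwa [← hpairing] at hnonneg

/-- Under Assumption F and the strict monotonicity condition
`F_r + F_p·w + wᵀ F_γ w ≥ 0`, the operator `T_h` is monotone:
`φ ≤ ψ` implies `T_h[φ] ≤ T_h[ψ]`. -/
theorem Th_monotone
    (d : ℕ) (T : ℝ) (hT : 0 < T)
    (μ : ℝ → Vec d → Vec d) (σ : ℝ → Vec d → Mat d)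
    (hμmeas : ∀ i, Measurable fun q : ℝ × Vec d => μ q.1 q.2 i)
    (hσmeas : ∀ i j, Measurable fun q : ℝ × Vec d => σ q.1 q.2 i j)
    (hμbdd : ∃ C : ℝ, ∀ s y, ‖μ s y‖ ≤ C)
    (hσbdd : ∃ C : ℝ, ∀ s y, ‖σ s y‖ ≤ C)
    (hσinv : ∀ s y, IsUnit (σ s y).det)
    (F Fr : ℝ → Vec d → ℝ → Vec d → Mat d → ℝ)
    (Fp : ℝ → Vec d → ℝ → Vec d → Mat d → Vec d)
    (Fγ : ℝ → Vec d → ℝ → Vec d → Mat d → Mat d)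
    (hF : AssumptionF d σ F Fr Fp Fγ)
    (hstrict : ∀ t x r p γ (w : Vec d),
      Fr t x r p γ + Fp t x r p γ ⬝ᵥ w + w ⬝ᵥ (Fγ t x r p γ).mulVec w ≥ 0) :
    ∀ φ ψ : ℝ → Vec d → ℝ,
      (∃ Cb : ℝ, ∀ t ∈ Icc (0 : ℝ) T, ∀ x, |φ t x| ≤ Cb ∧ |ψ t x| ≤ Cb) →
      Measurable (fun q : ℝ × Vec d => φ q.1 q.2) →
      Measurable (fun q : ℝ × Vec d => ψ q.1 q.2) →
      (∀ t ∈ Icc (0 : ℝ) T, ∀ x, φ t x ≤ ψ t x) →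
      ∀ h : ℝ, 0 < h → ∀ t : ℝ, 0 ≤ t → t + h ≤ T → ∀ x : Vec d,
        Th F μ σ φ h t x ≤ Th F μ σ ψ h t x := by
  rintro φ ψ ⟨C, hC⟩ hφ hψ hle h hh t ht htT x
  have hth : t + h ∈ Icc (0 : ℝ) T := ⟨by linarith, htT⟩
  exact Th_monotone_general hh (hσinv t x) (hF.differentiable t x) (hF.deriv_eq t x)
    (hF.trace_le_one t x) (hstrict t x)
    (integrable_euler_smul_jetWeight hφ.of_uncurry_left fun y => (hC _ hth y).1)
    (integrable_euler_smul_jetWeight hψ.of_uncurry_left fun y => (hC _ hth y).2)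
    (.of_forall fun w => hle _ hth _)

end
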